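/- Convolution decreases Fisher information: for all positive definite n-qudit states ρ and σ (so that ρ ⊠ σ is also positive definite), J(ρ ⊠ σ) ≤ min{J(ρ), J(σ)}. -/

import Mathlib

open scoped BigOperators ComplexOrder Classical ENNReal
open Matrix

namespace PaperQI

/-- The computational-basis index set `ℤ_d^n` for an `n`-qudit system. -/
abbrev QV (d n : ℕ) := Fin n → ZMod d

/-- Matrices (linear operators) on the `n`-qudit Hilbert space `(ℂ^d)^{⊗ n}`,
written in the computational basis indexed by `ℤ_d^n`. -/
abbrev Mat (d n : ℕ) := Matrix (QV d n) (QV d n) ℂ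

/-- The character `ξ^z = exp(2πi z/d)` for `z ∈ ℤ_d`. -/
noncomputable def ch (d : ℕ) (z : ZMod d) : ℂ :=
  Complex.exp (2 * Real.pi * Complex.I * (z.val : ℂ) / (d : ℂ))

/-- Dot product on `ℤ_d^n`. -/
def qdot {d n : ℕ} (p k : QV d n) : ZMod d := ∑ i, p i * k i

/-- The `n`-qudit Weyl operator `w(p,q) = ⊗_i ξ^{-2⁻¹ p_i q_i} Z^{p_i} X^{q_i}`
(for odd prime `d`).  Its matrix entries are
`w(p,q)[k+q, k] = ξ^{p·k + 2⁻¹ p·q}`. -/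
noncomputable def weyl (d n : ℕ) [Fact (Nat.Prime d)] (p q : QV d n) : Mat d n :=
  Matrix.of fun k' k =>
    if k' = k + q then ch d (qdot p k + (2 : ZMod d)⁻¹ * qdot p q) else 0

/-- `ρ` is an `n`-qudit state: positive semidefinite with trace one. -/
def IsState (d n : ℕ) [Fact (Nat.Prime d)] (ρ : Mat d n) : Prop :=
  ρ.PosSemidef ∧ ρ.trace = 1

/-- The characteristic function `Ξ_ρ(p,q) = Tr[ρ w(-p,-q)]`. -/
noncomputable def xi (d n : ℕ) [Fact (Nat.Prime d)] (ρ : Mat d n)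
    (pq : QV d n × QV d n) : ℂ :=
  (ρ * weyl d n (-pq.1) (-pq.2)).trace

/-- The mean state `M(ρ) = d^{-n} ∑_{|Ξ_ρ(p,q)| = 1} Ξ_ρ(p,q) w(p,q)`. -/
noncomputable def meanState (d n : ℕ) [Fact (Nat.Prime d)] (ρ : Mat d n) : Mat d n :=
  ((d : ℂ) ^ n)⁻¹ •
    ∑ pq : QV d n × QV d n,
      if ‖xi d n ρ pq‖ = 1 then xi d n ρ pq • weyl d n pq.1 pq.2 else 0

/-- `ρ` is a minimal stabilizer-projection state (MSPS): for some `r ≤ n` there are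
mutually commuting Weyl operators `w(p_i,q_i)`, `i = 1,…,r`, whose labels generate a
subgroup of `V^n` of order `d^r`, and phases `x ∈ ℤ_d^r`, such that
`ρ = d^{-(n-r)} ∏_i ( (1/d) ∑_{k ∈ ℤ_d} (ξ^{x_i} w(p_i,q_i))^k )`. -/
noncomputable def IsMSPS (d n : ℕ) [Fact (Nat.Prime d)] (ρ : Mat d n) : Prop :=
  ∃ r : ℕ, r ≤ n ∧
    ∃ (p q : Fin r → QV d n) (x : Fin r → ZMod d),
      (∀ i j, Commute (weyl d n (p i) (q i)) (weyl d n (p j) (q j))) ∧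
      Nat.card (AddSubgroup.closure (Set.range fun i => (p i, q i)) :
        AddSubgroup (QV d n × QV d n)) = d ^ r ∧
      ρ = ((d : ℂ) ^ (n - r))⁻¹ •
        (List.ofFn fun i =>
          (d : ℂ)⁻¹ • ∑ k : ZMod d, (ch d (x i) • weyl d n (p i) (q i)) ^ k.val).prod

/-- The magic gap `MG(ρ) = 1 - max{|Ξ_ρ(p,q)| : Ξ_ρ(p,q) ≠ 0, |Ξ_ρ(p,q)| ≠ 1}`,
and `MG(ρ) = 0` if this set is empty. -/
noncomputable def magicGap (d n : ℕ) [Fact (Nat.Prime d)] (ρ : Mat d n) : ℝ :=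
  let s : Finset ℝ :=
    (Finset.univ.filter fun pq : QV d n × QV d n =>
      xi d n ρ pq ≠ 0 ∧ ‖xi d n ρ pq‖ ≠ 1).image
      fun pq => ‖xi d n ρ pq‖
  if h : s.Nonempty then 1 - s.max' h else 0

/-- Von Neumann entropy `H(ρ) = -∑ λ_i log λ_i` (natural log, eigenvalues of `ρ`),
with the convention `0 log 0 = 0`; junk value `0` on non-Hermitian matrices. -/
noncomputable def vnEnt {d n : ℕ} [Fact (Nat.Prime d)] (ρ : Mat d n) : ℝ :=
  if h : ρ.IsHermitian then -∑ i, h.eigenvalues i * Real.log (h.eigenvalues i) else 0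

/-- Rényi entropy `H_α` for `α ∈ [0,∞]`:  `H_0 = log rank`, `H_1 = H` (von Neumann),
`H_∞ = -log λ_max`, and `H_α = (1-α)⁻¹ log ∑ λ_i^α` otherwise. -/
noncomputable def renyiEnt {d n : ℕ} [Fact (Nat.Prime d)] (α : ℝ≥0∞) (ρ : Mat d n) : ℝ :=
  if h : ρ.IsHermitian then
    if α = 0 then Real.log (ρ.rank : ℝ)
    else if α = 1 then -∑ i, h.eigenvalues i * Real.log (h.eigenvalues i)
    else if α = ⊤ then -Real.log (⨆ i, h.eigenvalues i)
    else (1 - α.toReal)⁻¹ * Real.log (∑ i, h.eigenvalues i ^ α.toReal)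
  else 0

/-- Matrix logarithm on the support: `log ρ = U diag(log λ_i) U†` via the spectral
decomposition, with `log 0 = 0` on the kernel; junk value `0` off Hermitian matrices. -/
noncomputable def matLog {d n : ℕ} [Fact (Nat.Prime d)] (ρ : Mat d n) : Mat d n :=
  if h : ρ.IsHermitian then
    (h.eigenvectorUnitary : Mat d n) *
      Matrix.diagonal (fun i => (Real.log (h.eigenvalues i) : ℂ)) *
      star (h.eigenvectorUnitary : Mat d n)
  else 0

/-- Matrix real power on the support: `ρ^t = U diag(λ_i^t) U†`, with `0^t = 0` on the
kernel (for `t ≠ 0`); junk value `0` off Hermitian matrices. -/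
noncomputable def matRpow {d n : ℕ} [Fact (Nat.Prime d)] (ρ : Mat d n) (t : ℝ) : Mat d n :=
  if h : ρ.IsHermitian then
    (h.eigenvectorUnitary : Mat d n) *
      Matrix.diagonal (fun i => ((h.eigenvalues i ^ t : ℝ) : ℂ)) *
      star (h.eigenvectorUnitary : Mat d n)
  else 0

/-- Support inclusion `supp ρ ⊆ supp σ`, expressed as `ker σ ⊆ ker ρ`
(the correct notion for positive semidefinite matrices). -/
def suppLE {d n : ℕ} [Fact (Nat.Prime d)] (ρ σ : Mat d n) : Prop :=
  ∀ v : QV d n → ℂ, σ.mulVec v = 0 → ρ.mulVec v = 0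

/-- Relative entropy `D(ρ‖σ) = Tr[ρ(log ρ - log σ)]` when `supp ρ ⊆ supp σ`, else `+∞`. -/
noncomputable def relEnt {d n : ℕ} [Fact (Nat.Prime d)] (ρ σ : Mat d n) : EReal :=
  if suppLE ρ σ then (((ρ * (matLog ρ - matLog σ)).trace.re : ℝ) : EReal) else ⊤

/-- Sandwiched Rényi relative entropy
`D_α(ρ‖σ) = (α-1)⁻¹ log Tr[(σ^{(1-α)/(2α)} ρ σ^{(1-α)/(2α)})^α]` for `α ≠ 1`
(with `+∞` when `supp ρ ⊄ supp σ`), and `D_1 = D` the relative entropy. -/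
noncomputable def sandRenyi {d n : ℕ} [Fact (Nat.Prime d)] (α : ℝ) (ρ σ : Mat d n) :
    EReal :=
  if α = 1 then relEnt ρ σ
  else if suppLE ρ σ then
    let x : ℝ := (α - 1)⁻¹ * Real.log
      ((matRpow (matRpow σ ((1 - α) / (2 * α)) * ρ * matRpow σ ((1 - α) / (2 * α)))
        α).trace.re)
    (x : EReal)
  else ⊤

/-- The key unitary `U|i,j⟩ = |N g₁₁ i - N g₁₀ j, -N g₀₁ i + N g₀₀ j⟩`,
where `N = (det G)⁻¹` in `ℤ_d`. -/
noncomputable def convU (d n : ℕ) [Fact (Nat.Prime d)] (g00 g01 g10 g11 : ZMod d) :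
    Matrix (QV d n × QV d n) (QV d n × QV d n) ℂ :=
  Matrix.of fun kl ij =>
    if kl = ((fun a => (g00 * g11 - g01 * g10)⁻¹ * g11 * ij.1 a
                      - (g00 * g11 - g01 * g10)⁻¹ * g10 * ij.2 a : QV d n),
             (fun a => -((g00 * g11 - g01 * g10)⁻¹ * g01) * ij.1 a
                      + (g00 * g11 - g01 * g10)⁻¹ * g00 * ij.2 a : QV d n))
    then 1 else 0

/-- Tensor (Kronecker) product of two `n`-qudit operators, on the doubled system. -/
def kron {d n : ℕ} (ρ σ : Mat d n) : Matrix (QV d n × QV d n) (QV d n × QV d n) ℂ :=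
  Matrix.of fun ij kl => ρ ij.1 kl.1 * σ ij.2 kl.2

/-- Partial trace over the second `n`-qudit factor. -/
noncomputable def ptrB {d n : ℕ} [Fact (Nat.Prime d)]
    (M : Matrix (QV d n × QV d n) (QV d n × QV d n) ℂ) : Mat d n :=
  Matrix.of fun i i' => ∑ j : QV d n, M (i, j) (i', j)

/-- The convolution `ρ ⊠ σ = Tr_B[U (ρ ⊗ σ) U†]` with parameter matrix
`G = [g₀₀, g₀₁; g₁₀, g₁₁]`. -/
noncomputable def conv (d n : ℕ) [Fact (Nat.Prime d)] (g00 g01 g10 g11 : ZMod d)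
    (ρ σ : Mat d n) : Mat d n :=
  ptrB (convU d n g00 g01 g10 g11 * kron ρ σ * (convU d n g00 g01 g10 g11)ᴴ)

/-- The beam-splitter unitary `U_{s,t}|i,j⟩ = |s i + t j, t i - s j⟩`. -/
noncomputable def bsU (d n : ℕ) [Fact (Nat.Prime d)] (s t : ZMod d) :
    Matrix (QV d n × QV d n) (QV d n × QV d n) ℂ :=
  Matrix.of fun kl ij =>
    if kl = ((fun a => s * ij.1 a + t * ij.2 a : QV d n),
             (fun a => t * ij.1 a - s * ij.2 a : QV d n))
    then 1 else 0

/-- The beam-splitter convolution `ρ ⊠_{s,t} σ = Tr_B[U_{s,t} (ρ ⊗ σ) U_{s,t}†]`. -/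
noncomputable def bsConv (d n : ℕ) [Fact (Nat.Prime d)] (s t : ZMod d)
    (ρ σ : Mat d n) : Mat d n :=
  ptrB (bsU d n s t * kron ρ σ * (bsU d n s t)ᴴ)

/-- Iterated self-convolution: `⊠^0 ρ = ρ` and `⊠^{N+1} ρ = (⊠^N ρ) ⊠ ρ`. -/
noncomputable def bsIter (d n : ℕ) [Fact (Nat.Prime d)] (s t : ZMod d) :
    ℕ → Mat d n → Mat d n
  | 0, ρ => ρ
  | N + 1, ρ => bsConv d n s t (bsIter d n s t N ρ) ρ

/-- `ρ` is the pure stabilizer state `|ψ⟩⟨ψ|` with stabilizer label group `S ⊆ V^n`: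
`S` has order `d^n` and `ψ` is a common eigenvector of all `w(p,q)`, `(p,q) ∈ S`. -/
noncomputable def IsPureStabilizerWithGroup (d n : ℕ) [Fact (Nat.Prime d)]
    (ρ : Mat d n) (S : AddSubgroup (QV d n × QV d n)) : Prop :=
  Nat.card S = d ^ n ∧
    ∃ ψ : QV d n → ℂ, ψ ≠ 0 ∧
      ρ = Matrix.of (fun a b => ψ a * starRingEnd ℂ (ψ b)) ∧
      ∀ pq ∈ S, ∃ c : ℂ, (weyl d n pq.1 pq.2).mulVec ψ = c • ψ

/-- `ρ` is a pure stabilizer state. -/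
noncomputable def IsPureStabilizer (d n : ℕ) [Fact (Nat.Prime d)] (ρ : Mat d n) : Prop :=
  ∃ S : AddSubgroup (QV d n × QV d n), IsPureStabilizerWithGroup d n ρ S

/-- `ρ` is a stabilizer state: a convex combination of pure stabilizer states. -/
noncomputable def IsStabilizerState (d n : ℕ) [Fact (Nat.Prime d)] (ρ : Mat d n) : Prop :=
  ∃ (m : ℕ) (p : Fin m → ℝ) (τ : Fin m → Mat d n),
    (∀ i, 0 ≤ p i) ∧ ∑ i, p i = 1 ∧ (∀ i, IsPureStabilizer d n (τ i)) ∧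
    ρ = ∑ i, (p i : ℂ) • τ i

/-- `U` is a Clifford unitary: a unitary mapping each Weyl operator, under conjugation,
to a complex phase times a Weyl operator. -/
noncomputable def IsClifford (d n : ℕ) [Fact (Nat.Prime d)] (U : Mat d n) : Prop :=
  U ∈ Matrix.unitaryGroup (QV d n) ℂ ∧
    ∀ pq : QV d n × QV d n, ∃ (c : ℂ) (pq' : QV d n × QV d n),
      ‖c‖ = 1 ∧ U * weyl d n pq.1 pq.2 * Uᴴ = c • weyl d n pq'.1 pq'.2

/-- The divergence-based quantum Fisher information `J(ρ; H) = Tr[ρ [H,[H, log ρ]]]`. -/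
noncomputable def fisherJ {d n : ℕ} [Fact (Nat.Prime d)] (ρ H : Mat d n) : ℝ :=
  (ρ * (H * (H * matLog ρ - matLog ρ * H) - (H * matLog ρ - matLog ρ * H) * H)).trace.re

/-- Embed a single-qudit operator at site `k` of an `n`-qudit system
(tensored with the identity elsewhere). -/
noncomputable def embedAt (d n : ℕ) (k : Fin n) (M : Matrix (ZMod d) (ZMod d) ℂ) :
    Mat d n :=
  Matrix.of fun v w => if ∀ i, i ≠ k → v i = w i then M (v k) (w k) else 0

/-- The rank-one projection `H_j^Z = |j⟩⟨j|` onto the eigenvector of `Z`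
with eigenvalue `ξ^j`. -/
noncomputable def projZ (d : ℕ) (j : ZMod d) : Matrix (ZMod d) (ZMod d) ℂ :=
  Matrix.of fun a b => if a = j ∧ b = j then 1 else 0

/-- The rank-one projection `H_j^X` onto the eigenvector of `X` with eigenvalue `ξ^j`;
its entries are `(H_j^X)_{a b} = d⁻¹ ξ^{j(b-a)}`. -/
noncomputable def projX (d : ℕ) (j : ZMod d) : Matrix (ZMod d) (ZMod d) ℂ :=
  Matrix.of fun a b => (d : ℂ)⁻¹ * ch d (j * (b - a))

/-- Total Fisher information
`J(ρ) = ∑_{k=1}^n ∑_{j ∈ ℤ_d} J(ρ; H_j^{X_k}) + J(ρ; H_j^{Z_k})`. -/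
noncomputable def fisherTotal (d n : ℕ) [Fact (Nat.Prime d)] (ρ : Mat d n) : ℝ :=
  ∑ k : Fin n, ∑ j : ZMod d,
    (fisherJ ρ (embedAt d n k (projX d j)) + fisherJ ρ (embedAt d n k (projZ d j)))

/-- Holevo capacity of a channel `E`:
`χ(E) = sup H(∑ p_i E(ρ_i)) - ∑ p_i H(E(ρ_i))` over finite ensembles of states. -/
noncomputable def holevoCap (d n : ℕ) [Fact (Nat.Prime d)] (E : Mat d n → Mat d n) : ℝ :=
  ⨆ m : ℕ, ⨆ p : Fin m → ℝ, ⨆ ρs : Fin m → Mat d n,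
    ⨆ _ : (∀ i, 0 ≤ p i) ∧ ∑ i, p i = 1 ∧ ∀ i, IsState d n (ρs i),
      (vnEnt (∑ i, (p i : ℂ) • E (ρs i)) - ∑ i, p i * vnEnt (E (ρs i)))

/-- Hilbert–Schmidt norm `‖A‖₂ = (Tr[A†A])^{1/2}`. -/
noncomputable def hsNorm {d n : ℕ} [Fact (Nat.Prime d)] (A : Mat d n) : ℝ :=
  Real.sqrt ((Aᴴ * A).trace.re)

/-- Trace norm `‖A‖₁ = Tr[(A†A)^{1/2}]`. -/
noncomputable def trNorm {d n : ℕ} [Fact (Nat.Prime d)] (A : Mat d n) : ℝ :=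
  (matRpow (Aᴴ * A) (2⁻¹ : ℝ)).trace.re

/-- Tensor product of an `n₁`-qudit operator with an `n₂`-qudit operator,
as an `(n₁+n₂)`-qudit operator. -/
def tensorMat (d n₁ n₂ : ℕ) (ρ₁ : Mat d n₁) (ρ₂ : Mat d n₂) : Mat d (n₁ + n₂) :=
  Matrix.of fun v w =>
    ρ₁ (fun i => v (Fin.castAdd n₂ i)) (fun i => w (Fin.castAdd n₂ i)) *
    ρ₂ (fun j => v (Fin.natAdd n₁ j)) (fun j => w (Fin.natAdd n₁ j))

/-! ### Qubit (`d = 2`) specific definitions -/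

/-- The `n`-qubit Weyl (Pauli) operator `w(p,q) = ⊗_i i^{-p_i q_i} Z^{p_i} X^{q_i}`. -/
noncomputable def weyl2 (n : ℕ) (p q : Fin n → ZMod 2) :
    Matrix (Fin n → ZMod 2) (Fin n → ZMod 2) ℂ :=
  Matrix.of fun k' k =>
    if k' = k + q then
      ∏ i, ((-Complex.I) ^ ((p i).val * (q i).val) *
        (-1 : ℂ) ^ ((p i * (k i + q i)).val))
    else 0

/-- The `n`-qubit characteristic function `Ξ_ρ(p,q) = Tr[ρ w(p,q)†]`. -/
noncomputable def xi2 (n : ℕ) (ρ : Matrix (Fin n → ZMod 2) (Fin n → ZMod 2) ℂ)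
    (pq : (Fin n → ZMod 2) × (Fin n → ZMod 2)) : ℂ :=
  (ρ * (weyl2 n pq.1 pq.2)ᴴ).trace

/-- The logarithmic magic gap
`LMG(ρ) = -log₂ max{|Ξ_ρ(p,q)| : Ξ_ρ(p,q) ≠ 0, |Ξ_ρ(p,q)| ≠ 1}` (`0` if the set is
empty). -/
noncomputable def lmg (n : ℕ) (ρ : Matrix (Fin n → ZMod 2) (Fin n → ZMod 2) ℂ) : ℝ :=
  let s : Finset ℝ :=
    (Finset.univ.filter fun pq : (Fin n → ZMod 2) × (Fin n → ZMod 2) =>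
      xi2 n ρ pq ≠ 0 ∧ ‖xi2 n ρ pq‖ ≠ 1).image
      fun pq => ‖xi2 n ρ pq‖
  if h : s.Nonempty then -Real.logb 2 (s.max' h) else 0

/-- `U` is an `n`-qubit Clifford unitary. -/
noncomputable def IsClifford2 (n : ℕ) (U : Matrix (Fin n → ZMod 2) (Fin n → ZMod 2) ℂ) :
    Prop :=
  U ∈ Matrix.unitaryGroup (Fin n → ZMod 2) ℂ ∧
    ∀ pq : (Fin n → ZMod 2) × (Fin n → ZMod 2),
      ∃ (c : ℂ) (pq' : (Fin n → ZMod 2) × (Fin n → ZMod 2)),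
        ‖c‖ = 1 ∧ U * weyl2 n pq.1 pq.2 * Uᴴ = c • weyl2 n pq'.1 pq'.2

/-- The T gate `diag(1, e^{iπ/4})` acting on qubit `k` of an `n`-qubit system. -/
noncomputable def tGateAt (n : ℕ) (k : Fin n) :
    Matrix (Fin n → ZMod 2) (Fin n → ZMod 2) ℂ :=
  embedAt 2 n k (Matrix.of fun a b =>
    if a = b then (if a = 0 then 1 else Complex.exp (Real.pi * Complex.I / 4)) else 0)

/-- An `n`-qubit state: positive semidefinite with trace one. -/
def IsState2 (n : ℕ) (ρ : Matrix (Fin n → ZMod 2) (Fin n → ZMod 2) ℂ) : Prop :=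
  ρ.PosSemidef ∧ ρ.trace = 1

end PaperQI

namespace PaperQI

/-!
Each family `(H_j)` is the discrete Fourier transform of a family of Weyl operators. Parseval's
identity then turns the sum over `j` of the double commutators into one over the translates of `ρ`:
`J(ρ) = (2 / d) ∑ D(ρ‖w ρ w†)`, where `w` runs over the Weyl operators supported on one site along
one of the two axes. For fixed `σ`, the map `ρ ↦ ρ ⊠ σ` is a channel, and it carries translation by
`w(p, q)` to translation by `w(g₀₀ p, g₁₁ (det G)⁻¹ q)`. Hence data processing for the relative
entropy bounds the terms of `J(ρ ⊠ σ)` by those of `J(ρ)`, and the bound by `J(σ)` follows by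
exchanging the columns of `G`.

Data processing itself comes from `log x - log y = ∫₀¹ (x - y) / ((1 - t) x + t y) dt`, which
expresses `D(ρ‖σ)` through the numbers `⟨ρ, M_t⁻¹ ρ⟩` with `M_t X = (1 - t) X ρ + t σ X`. Each of
them is the maximum of `2 Re ⟨X, ρ⟩ - ⟨X, M_t X⟩` over `X`, and by the Kadison–Schwarz inequality a
channel cannot increase this maximum.
-/

section PosSemidef

variable {ι : Type*} [Fintype ι]

lemma re_trace_nonneg_of_posSemidef {A : Matrix ι ι ℂ} (hA : A.PosSemidef) : 0 ≤ A.trace.re :=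
  (Complex.le_def.1 hA.trace_nonneg).1

open scoped MatrixOrder Matrix.Norms.L2Operator in
lemma exists_eq_mul_conjTranspose_of_posSemidef {A : Matrix ι ι ℂ} (hA : A.PosSemidef) :
    ∃ B : Matrix ι ι ℂ, A = B * Bᴴ := by
  classical exact CStarAlgebra.nonneg_iff_eq_mul_star_self.1 hA.nonneg

lemma re_trace_mul_nonneg {A B : Matrix ι ι ℂ} (hA : A.PosSemidef) (hB : B.PosSemidef) :
    0 ≤ (A * B).trace.re := by
  obtain ⟨C, rfl⟩ := exists_eq_mul_conjTranspose_of_posSemidef hB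
  rw [← Matrix.mul_assoc, Matrix.trace_mul_comm, ← Matrix.mul_assoc]
  exact re_trace_nonneg_of_posSemidef (hA.conjTranspose_mul_mul_same C)

end PosSemidef

section Channels

variable {ι ι' κ : Type*} [Fintype ι] [Fintype κ]

/-- The completely positive map `A ↦ ∑ₖ Kₖ A Kₖ†` with Kraus operators `K`. It preserves the trace
when `∑ₖ Kₖ† Kₖ = 1`, and its Hilbert–Schmidt adjoint is the map with Kraus operators `Kₖ†`. -/
def krausMap (K : κ → Matrix ι' ι ℂ) (A : Matrix ι ι ℂ) : Matrix ι' ι' ℂ :=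
  ∑ k, K k * A * (K k)ᴴ

lemma conjTranspose_krausMap (K : κ → Matrix ι' ι ℂ) (A : Matrix ι ι ℂ) :
    (krausMap K A)ᴴ = krausMap K Aᴴ := by
  simp only [krausMap, conjTranspose_sum, conjTranspose_mul, conjTranspose_conjTranspose,
    Matrix.mul_assoc]

lemma posSemidef_krausMap [Finite ι'] (K : κ → Matrix ι' ι ℂ) {A : Matrix ι ι ℂ}
    (hA : A.PosSemidef) : (krausMap K A).PosSemidef :=
  posSemidef_sum _ fun k _ => hA.mul_mul_conjTranspose_same (K k)

lemma posDef_krausMap [Finite ι'] [DecidableEq ι] {K : κ → Matrix ι' ι ℂ}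
    (hK : (krausMap K 1).PosDef) {A : Matrix ι ι ℂ} (hA : A.PosDef) :
    (krausMap K A).PosDef := by
  cases nonempty_fintype ι'
  have hform (B : Matrix ι ι ℂ) (x : ι' → ℂ) : star x ⬝ᵥ (krausMap K B *ᵥ x) =
      ∑ k, star ((K k)ᴴ *ᵥ x) ⬝ᵥ (B *ᵥ ((K k)ᴴ *ᵥ x)) := by
    simp only [krausMap, sum_mulVec, dotProduct_sum, star_mulVec, conjTranspose_conjTranspose,
      dotProduct_mulVec, vecMul_vecMul, Matrix.mul_assoc]
  refine .of_dotProduct_mulVec_pos (posSemidef_krausMap K hA.posSemidef).1 fun x hx => ?_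
  obtain ⟨k, hk⟩ : ∃ k, (K k)ᴴ *ᵥ x ≠ 0 := by
    by_contra! hzero
    have hpos := hK.dotProduct_mulVec_pos hx
    simp [hform, hzero] at hpos
  rw [hform]
  exact Finset.sum_pos' (fun k _ => hA.posSemidef.dotProduct_mulVec_nonneg _)
    ⟨k, Finset.mem_univ k, hA.dotProduct_mulVec_pos hk⟩

variable [Fintype ι']

lemma trace_krausMap_mul (K : κ → Matrix ι' ι ℂ) (A : Matrix ι ι ℂ) (B : Matrix ι' ι' ℂ) :
    (krausMap K A * B).trace = (A * krausMap (fun k => (K k)ᴴ) B).trace := by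
  simp only [krausMap, Finset.sum_mul, Finset.mul_sum, trace_sum, conjTranspose_conjTranspose]
  refine Finset.sum_congr rfl fun k _ => ?_
  rw [Matrix.mul_assoc, Matrix.mul_assoc, Matrix.trace_mul_comm]
  simp only [Matrix.mul_assoc]

lemma trace_krausMap [DecidableEq ι] {K : κ → Matrix ι' ι ℂ} (hK : ∑ k, (K k)ᴴ * K k = 1)
    (A : Matrix ι ι ℂ) : (krausMap K A).trace = A.trace := by
  classical
  have hunital : krausMap (fun k => (K k)ᴴ) 1 = 1 := by simpa [krausMap] using hK
  rw [← Matrix.mul_one (krausMap K A), trace_krausMap_mul, hunital, Matrix.mul_one]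

lemma sum_conjTranspose_mul_self_eq_one [DecidableEq ι] {K : κ → Matrix ι' ι ℂ}
    (hK : ∀ A, (krausMap K A).trace = A.trace) : ∑ k, (K k)ᴴ * K k = 1 := by
  classical
  refine ext_iff_trace_mul_left.2 fun A => ?_
  rw [Matrix.mul_one, ← hK A, ← Matrix.mul_one (krausMap K A), trace_krausMap_mul]
  simp [krausMap]

/-- The Kadison–Schwarz inequality. -/
lemma posSemidef_krausMap_mul_conjTranspose_sub [DecidableEq ι'] {K : κ → Matrix ι' ι ℂ}
    (hK : ∑ k, K k * (K k)ᴴ = 1) (X : Matrix ι ι ℂ) :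
    (krausMap K (X * Xᴴ) - krausMap K X * (krausMap K X)ᴴ).PosSemidef := by
  set Y := krausMap K X with hY
  have hsquare : krausMap K (X * Xᴴ) - Y * Yᴴ =
      ∑ k, (K k * X - Y * K k) * (K k * X - Y * K k)ᴴ := by
    have hcross : ∑ k, K k * X * (K k)ᴴ * Yᴴ = Y * Yᴴ := by rw [← Finset.sum_mul]; rfl
    have hcross' : ∑ k, Y * (K k * Xᴴ * (K k)ᴴ) = Y * Yᴴ := by
      rw [← Finset.mul_sum, hY, conjTranspose_krausMap]; rfl
    have hquad : ∑ k, Y * (K k * (K k)ᴴ) * Yᴴ = Y * Yᴴ := by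
      rw [← Finset.sum_mul, ← Finset.mul_sum, hK, Matrix.mul_one]
    have hexpand (k : κ) : (K k * X - Y * K k) * (K k * X - Y * K k)ᴴ =
        K k * (X * Xᴴ) * (K k)ᴴ - K k * X * (K k)ᴴ * Yᴴ - Y * (K k * Xᴴ * (K k)ᴴ) +
          Y * (K k * (K k)ᴴ) * Yᴴ := by
      simp only [conjTranspose_sub, conjTranspose_mul, Matrix.sub_mul, Matrix.mul_sub,
        Matrix.mul_assoc]
      abel
    simp only [hexpand, Finset.sum_add_distrib, Finset.sum_sub_distrib, hcross, hcross', hquad]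
    rw [krausMap]
    abel
  rw [hsquare]
  exact posSemidef_sum _ fun k _ => posSemidef_self_mul_conjTranspose _

end Channels

section SpectralSum

variable {ι : Type*} [Fintype ι] [DecidableEq ι] {A B : Matrix ι ι ℂ}

/-- The matrix `V† U` of overlaps `⟨bⱼ, aᵢ⟩` between the eigenbasis `U` of `A` and the eigenbasis
`V` of `B`; the row index refers to `B`. -/
noncomputable def eigenOverlap (hA : A.IsHermitian) (hB : B.IsHermitian) : Matrix ι ι ℂ :=
  star (hB.eigenvectorUnitary : Matrix ι ι ℂ) * hA.eigenvectorUnitary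

/-- The sum of `f a b` over the eigenvalues `a` of `A` and `b` of `B`, weighted by the squared
overlaps of the eigenvectors. For `f a b = a * g a b` this is the expectation of `g` in the
Nussbaum–Szkoła distribution. -/
noncomputable def spectralSum (hA : A.IsHermitian) (hB : B.IsHermitian) (f : ℝ → ℝ → ℝ) : ℝ :=
  ∑ i, ∑ j, ‖eigenOverlap hA hB j i‖ ^ 2 * f (hA.eigenvalues i) (hB.eigenvalues j)

lemma spectralSum_congr (hA : A.IsHermitian) (hB : B.IsHermitian) {f g : ℝ → ℝ → ℝ}
    (h : ∀ i j, f (hA.eigenvalues i) (hB.eigenvalues j) =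
      g (hA.eigenvalues i) (hB.eigenvalues j)) :
    spectralSum hA hB f = spectralSum hA hB g := by
  simp only [spectralSum, h]

lemma spectralSum_sub (hA : A.IsHermitian) (hB : B.IsHermitian) (f g : ℝ → ℝ → ℝ) :
    spectralSum hA hB (fun x y => f x y - g x y) = spectralSum hA hB f - spectralSum hA hB g := by
  simp only [spectralSum, mul_sub, Finset.sum_sub_distrib]

lemma spectralSum_const_mul (hA : A.IsHermitian) (hB : B.IsHermitian) (c : ℝ) (f : ℝ → ℝ → ℝ) :
    spectralSum hA hB (fun x y => c * f x y) = c * spectralSum hA hB f := by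
  simp only [spectralSum, Finset.mul_sum, mul_left_comm c]

lemma cfc_eq_eigenvectorUnitary_mul (hA : A.IsHermitian) (f : ℝ → ℝ) :
    cfc f A = (hA.eigenvectorUnitary : Matrix ι ι ℂ) *
      diagonal (fun i => (f (hA.eigenvalues i) : ℂ)) *
        star (hA.eigenvectorUnitary : Matrix ι ι ℂ) := by
  rw [hA.cfc_eq, IsHermitian.cfc, Unitary.conjStarAlgAut_apply]
  rfl

lemma trace_conjTranspose_mul_eigenOverlap_mul_diagonal (hA : A.IsHermitian)
    (hB : B.IsHermitian) (c : ι → ι → ℝ) (f : ι → ℝ) :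
    ((of fun j i => (c i j : ℂ) * eigenOverlap hA hB j i)ᴴ * (eigenOverlap hA hB *
      diagonal fun i => (f i : ℂ))).trace =
      (∑ i, ∑ j, ‖eigenOverlap hA hB j i‖ ^ 2 * (c i j * f i) : ℝ) := by
  simp only [trace, diag, Matrix.mul_apply (M := _ᴴ), mul_diagonal, conjTranspose_apply, of_apply,
    star_mul', Complex.star_def, Complex.conj_ofReal, Complex.ofReal_sum, Complex.ofReal_mul,
    Complex.ofReal_pow, ← Complex.conj_mul']
  exact Finset.sum_congr rfl fun i _ => Finset.sum_congr rfl fun j _ => by ring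

lemma trace_cfc_mul_cfc (hA : A.IsHermitian) (hB : B.IsHermitian) (f g : ℝ → ℝ) :
    (cfc f A * cfc g B).trace = spectralSum hA hB fun x y => f x * g y := by
  set U := (hA.eigenvectorUnitary : Matrix ι ι ℂ)
  set V := (hB.eigenvectorUnitary : Matrix ι ι ℂ)
  set C := eigenOverlap hA hB with hC
  have hweighted : (of fun j i => (g (hB.eigenvalues j) : ℂ) * C j i) =
      diagonal (fun j => (g (hB.eigenvalues j) : ℂ)) * C := by
    ext j i; simp
  have hcyclic : (cfc f A * cfc g B).trace =
      ((diagonal (fun j => (g (hB.eigenvalues j) : ℂ)) * C)ᴴ *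
        (C * diagonal fun i => (f (hA.eigenvalues i) : ℂ))).trace := by
    have hDb : (diagonal fun j => (g (hB.eigenvalues j) : ℂ))ᴴ =
        diagonal fun j => (g (hB.eigenvalues j) : ℂ) := by
      simp [diagonal_conjTranspose, Pi.star_def]
    rw [cfc_eq_eigenvectorUnitary_mul hA, cfc_eq_eigenvectorUnitary_mul hB, Matrix.mul_assoc,
      Matrix.mul_assoc, Matrix.trace_mul_comm, conjTranspose_mul, hDb, hC, eigenOverlap]
    simp only [← star_eq_conjTranspose, star_mul, star_star, Matrix.mul_assoc]
    rw [Matrix.trace_mul_comm]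
    simp only [Matrix.mul_assoc]
  rw [hcyclic, ← hweighted, trace_conjTranspose_mul_eigenOverlap_mul_diagonal, spectralSum]
  simp only [mul_comm]

/-- Umegaki's relative entropy `D(ρ‖σ) = Tr[ρ (log ρ - log σ)]`; the value is meaningful for
positive definite `σ`, since `Real.log 0 = 0`. -/
noncomputable def relativeEntropy (ρ σ : Matrix ι ι ℂ) : ℝ :=
  (ρ * (cfc Real.log ρ - cfc Real.log σ)).trace.re

lemma relativeEntropy_eq_spectralSum (hA : A.IsHermitian) (hB : B.IsHermitian) :
    relativeEntropy A B = spectralSum hA hB fun x y => x * (Real.log x - Real.log y) := by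
  have hA' : IsSelfAdjoint A := hA
  have hB' : IsSelfAdjoint B := hB
  have hcross := trace_cfc_mul_cfc hA hB id Real.log
  have hself := trace_cfc_mul_cfc hA hB (fun x => x * Real.log x) 1
  have hlog : cfc (fun x => x * Real.log x) A = A * cfc Real.log A := by
    have hcont : ContinuousOn Real.log (spectrum ℝ A) := A.finite_real_spectrum.continuousOn _
    rw [cfc_mul (fun x => x) Real.log A continuousOn_id hcont, cfc_id' ℝ A hA']
  rw [hlog, cfc_one ℝ B hB', Matrix.mul_one] at hself
  rw [cfc_id ℝ A hA'] at hcross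
  rw [relativeEntropy, Matrix.mul_sub, trace_sub, hcross, hself, ← Complex.ofReal_sub,
    ← spectralSum_sub, Complex.ofReal_re]
  simp only [Pi.one_apply, mul_one, id, mul_sub]

lemma re_trace_eq_spectralSum (hA : A.IsHermitian) (hB : B.IsHermitian) :
    A.trace.re = spectralSum hA hB fun x _ => x := by
  have hA' : IsSelfAdjoint A := hA
  have hB' : IsSelfAdjoint B := hB
  have h := trace_cfc_mul_cfc hA hB id 1
  rw [cfc_id ℝ A hA', cfc_one ℝ B hB', Matrix.mul_one] at h
  simpa using congrArg Complex.re h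

end SpectralSum

section Interpolation

variable {ι ι' κ : Type*} [Fintype ι] [Fintype ι'] [Fintype κ]

/-- The superoperator `X ↦ (1 - t) X ρ + t σ X`, which interpolates between right multiplication by
`ρ` and left multiplication by `σ`. -/
noncomputable def interpolatedMul (t : ℝ) (ρ σ X : Matrix ι ι ℂ) : Matrix ι ι ℂ :=
  (1 - t) • (X * ρ) + t • (σ * X)

/-- The concave functional `X ↦ 2 Re ⟨X, ρ⟩ - ⟨X, (1 - t) X ρ + t σ X⟩`, for the Hilbert–Schmidt
inner product. Its maximum is the value at `ρ` of the quadratic form of the inverse of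
`interpolatedMul t ρ σ`. -/
noncomputable def variationalForm (t : ℝ) (ρ σ X : Matrix ι ι ℂ) : ℝ :=
  2 * (Xᴴ * ρ).trace.re - (Xᴴ * interpolatedMul t ρ σ X).trace.re

lemma interpolatedMul_sub (t : ℝ) (ρ σ X Y : Matrix ι ι ℂ) :
    interpolatedMul t ρ σ (X - Y) = interpolatedMul t ρ σ X - interpolatedMul t ρ σ Y := by
  simp only [interpolatedMul, Matrix.sub_mul, Matrix.mul_sub, smul_sub]
  abel

lemma re_trace_mul_interpolatedMul (t : ℝ) (ρ σ X Y : Matrix ι ι ℂ) :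
    (Xᴴ * interpolatedMul t ρ σ Y).trace.re =
      (1 - t) * (ρ * (Xᴴ * Y)).trace.re + t * (σ * (Y * Xᴴ)).trace.re := by
  rw [interpolatedMul, Matrix.mul_add, Matrix.mul_smul, Matrix.mul_smul, trace_add, trace_smul,
    trace_smul, ← Matrix.mul_assoc, Matrix.trace_mul_comm (Xᴴ * Y), Matrix.trace_mul_comm Xᴴ,
    Matrix.mul_assoc]
  simp

lemma re_trace_conjTranspose (A : Matrix ι ι ℂ) : Aᴴ.trace.re = A.trace.re := by
  rw [trace_conjTranspose]
  rfl

lemma re_trace_mul_interpolatedMul_comm {ρ σ : Matrix ι ι ℂ} (hρ : ρ.IsHermitian)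
    (hσ : σ.IsHermitian) (t : ℝ) (X Y : Matrix ι ι ℂ) :
    (Xᴴ * interpolatedMul t ρ σ Y).trace.re = (Yᴴ * interpolatedMul t ρ σ X).trace.re := by
  rw [← re_trace_conjTranspose, interpolatedMul, interpolatedMul]
  simp only [conjTranspose_mul, conjTranspose_add, conjTranspose_smul, conjTranspose_conjTranspose,
    hρ.eq, hσ.eq, star_trivial, Matrix.mul_add, Matrix.mul_smul, trace_add, trace_smul]
  rw [Matrix.mul_assoc, Matrix.trace_mul_comm ρ, Matrix.mul_assoc, Matrix.mul_assoc]

lemma re_trace_mul_interpolatedMul_nonneg {t : ℝ} (ht : t ∈ Set.Icc (0 : ℝ) 1)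
    {ρ σ : Matrix ι ι ℂ} (hρ : ρ.PosSemidef) (hσ : σ.PosSemidef) (X : Matrix ι ι ℂ) :
    0 ≤ (Xᴴ * interpolatedMul t ρ σ X).trace.re := by
  rw [re_trace_mul_interpolatedMul]
  exact add_nonneg
    (mul_nonneg (sub_nonneg.2 ht.2) (re_trace_mul_nonneg hρ (posSemidef_conjTranspose_mul_self X)))
    (mul_nonneg ht.1 (re_trace_mul_nonneg hσ (posSemidef_self_mul_conjTranspose X)))

lemma variationalForm_self {t : ℝ} {ρ σ X₀ : Matrix ι ι ℂ} (hX₀ : interpolatedMul t ρ σ X₀ = ρ) :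
    variationalForm t ρ σ X₀ = (X₀ᴴ * ρ).trace.re := by
  rw [variationalForm, hX₀]
  ring

lemma variationalForm_le {t : ℝ} (ht : t ∈ Set.Icc (0 : ℝ) 1) {ρ σ X₀ : Matrix ι ι ℂ}
    (hρ : ρ.PosSemidef) (hσ : σ.PosSemidef) (hX₀ : interpolatedMul t ρ σ X₀ = ρ)
    (X : Matrix ι ι ℂ) : variationalForm t ρ σ X ≤ (X₀ᴴ * ρ).trace.re := by
  have hsquare := re_trace_mul_interpolatedMul_nonneg ht hρ hσ (X - X₀)
  have hcross := re_trace_mul_interpolatedMul_comm hρ.1 hσ.1 t X₀ X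
  simp only [interpolatedMul_sub, conjTranspose_sub, Matrix.sub_mul, Matrix.mul_sub, trace_sub,
    Complex.sub_re, hX₀] at hsquare hcross
  rw [variationalForm]
  linarith

lemma re_trace_mul_krausMap_adjoint_le [DecidableEq ι] {K : κ → Matrix ι' ι ℂ}
    (hK : ∑ k, (K k)ᴴ * K k = 1) {ρ : Matrix ι ι ℂ} (hρ : ρ.PosSemidef) (X : Matrix ι' ι' ℂ) :
    (ρ * (krausMap (fun k => (K k)ᴴ) X * (krausMap (fun k => (K k)ᴴ) X)ᴴ)).trace.re ≤
      (krausMap K ρ * (X * Xᴴ)).trace.re := by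
  have hunital : ∑ k, (K k)ᴴ * ((K k)ᴴ)ᴴ = 1 := by simpa only [conjTranspose_conjTranspose]
  have h := re_trace_mul_nonneg hρ (posSemidef_krausMap_mul_conjTranspose_sub hunital X)
  rwa [Matrix.mul_sub, trace_sub, Complex.sub_re, sub_nonneg, ← trace_krausMap_mul] at h

lemma variationalForm_krausMap_le [DecidableEq ι] {K : κ → Matrix ι' ι ℂ}
    (hK : ∑ k, (K k)ᴴ * K k = 1) {t : ℝ} (ht : t ∈ Set.Icc (0 : ℝ) 1) {ρ σ : Matrix ι ι ℂ}
    (hρ : ρ.PosSemidef) (hσ : σ.PosSemidef) (X : Matrix ι' ι' ℂ) :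
    variationalForm t (krausMap K ρ) (krausMap K σ) X ≤
      variationalForm t ρ σ (krausMap (fun k => (K k)ᴴ) X) := by
  have hlinear : (Xᴴ * krausMap K ρ).trace =
      ((krausMap (fun k => (K k)ᴴ) X)ᴴ * ρ).trace := by
    rw [Matrix.trace_mul_comm, trace_krausMap_mul, conjTranspose_krausMap, Matrix.trace_mul_comm]
  have hleft := re_trace_mul_krausMap_adjoint_le hK hσ X
  have hright := re_trace_mul_krausMap_adjoint_le hK hρ Xᴴ
  rw [← conjTranspose_krausMap, conjTranspose_conjTranspose, conjTranspose_conjTranspose] at hright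
  rw [variationalForm, variationalForm, re_trace_mul_interpolatedMul,
    re_trace_mul_interpolatedMul, hlinear]
  linarith [mul_le_mul_of_nonneg_left hleft ht.1,
    mul_le_mul_of_nonneg_left hright (sub_nonneg.2 ht.2)]

end Interpolation

section DataProcessing

variable {ι ι' κ : Type*} [Fintype ι] [DecidableEq ι] [Fintype ι'] [DecidableEq ι'] [Fintype κ]

lemma interpolation_pos {x y t : ℝ} (hx : 0 < x) (hy : 0 < y) (ht : t ∈ Set.Icc (0 : ℝ) 1) :
    0 < (1 - t) * x + t * y :=
  convex_Ioi (0 : ℝ) hx hy (sub_nonneg.2 ht.2) ht.1 (by ring)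

/-- The quadratic form of the inverse of `interpolatedMul t A B`, evaluated at `A`, in terms of the
spectral decompositions of `A` and `B`. -/
noncomputable def resolventForm {A B : Matrix ι ι ℂ} (hA : A.IsHermitian) (hB : B.IsHermitian)
    (t : ℝ) : ℝ :=
  spectralSum hA hB fun x y => x ^ 2 / ((1 - t) * x + t * y)

lemma interpolatedMul_unitary_conj (t : ℝ) {U V : Matrix ι ι ℂ} (hU : star U * U = 1)
    (hV : star V * V = 1) (A B X : Matrix ι ι ℂ) :
    interpolatedMul t (U * A * star U) (V * B * star V) (V * X * star U) =
      V * interpolatedMul t A B X * star U := by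
  have hright : V * X * star U * (U * A * star U) = V * X * (star U * U) * A * star U := by
    simp only [Matrix.mul_assoc]
  have hleft : V * B * star V * (V * X * star U) = V * B * (star V * V) * X * star U := by
    simp only [Matrix.mul_assoc]
  rw [interpolatedMul, hright, hleft, hU, hV, interpolatedMul]
  simp only [Matrix.mul_one, Matrix.mul_add, Matrix.add_mul, Matrix.mul_smul, Matrix.smul_mul,
    Matrix.mul_assoc]

lemma interpolatedMul_diagonal {a b : ι → ℝ} {t : ℝ}
    (hm : ∀ i j, (1 - t) * a i + t * b j ≠ 0) (C : Matrix ι ι ℂ) :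
    interpolatedMul t (diagonal fun i => (a i : ℂ)) (diagonal fun j => (b j : ℂ))
      (of fun j i => ((a i / ((1 - t) * a i + t * b j) : ℝ) : ℂ) * C j i) =
        C * diagonal fun i => (a i : ℂ) := by
  ext j i
  have hm' : (((1 - t) * a i + t * b j : ℝ) : ℂ) ≠ 0 := Complex.ofReal_ne_zero.2 (hm i j)
  simp only [interpolatedMul, Matrix.add_apply, Matrix.smul_apply, mul_diagonal, diagonal_mul,
    of_apply, Complex.real_smul, Complex.ofReal_div]
  field_simp
  push_cast
  ring

lemma exists_interpolatedMul_eq {ρ σ : Matrix ι ι ℂ} (hρ : ρ.PosDef) (hσ : σ.PosDef) {t : ℝ}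
    (ht : t ∈ Set.Icc (0 : ℝ) 1) :
    ∃ X, interpolatedMul t ρ σ X = ρ ∧ (Xᴴ * ρ).trace.re = resolventForm hρ.1 hσ.1 t := by
  set U := (hρ.1.eigenvectorUnitary : Matrix ι ι ℂ)
  set V := (hσ.1.eigenvectorUnitary : Matrix ι ι ℂ)
  set a := hρ.1.eigenvalues
  set b := hσ.1.eigenvalues
  set C := eigenOverlap hρ.1 hσ.1
  have hUU : star U * U = 1 := Unitary.coe_star_mul_self _
  have hVV : star V * V = 1 := Unitary.coe_star_mul_self _
  have hC : C = star V * U := rfl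
  have hρU : ρ = U * diagonal (fun i => (a i : ℂ)) * star U :=
    (cfc_id ℝ ρ hρ.1.isSelfAdjoint).symm.trans (cfc_eq_eigenvectorUnitary_mul hρ.1 id)
  have hσV : σ = V * diagonal (fun j => (b j : ℂ)) * star V :=
    (cfc_id ℝ σ hσ.1.isSelfAdjoint).symm.trans (cfc_eq_eigenvectorUnitary_mul hσ.1 id)
  have hsolve := interpolatedMul_diagonal (fun i j =>
    (interpolation_pos (hρ.eigenvalues_pos i) (hσ.eigenvalues_pos j) ht).ne') C
  set Y : Matrix ι ι ℂ := of fun j i => ((a i / ((1 - t) * a i + t * b j) : ℝ) : ℂ) * C j i with hY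
  refine ⟨V * Y * star U, ?_, ?_⟩
  · have hVC : V * C = U := by
      rw [hC, ← Matrix.mul_assoc, mul_eq_one_comm.1 hVV, Matrix.one_mul]
    calc interpolatedMul t ρ σ (V * Y * star U)
        = V * (C * diagonal fun i => (a i : ℂ)) * star U := by
          rw [← hsolve, ← interpolatedMul_unitary_conj t hUU hVV, ← hρU, ← hσV]
      _ = ρ := by rw [← Matrix.mul_assoc, hVC, ← hρU]
  · have hcyclic : ((V * Y * star U)ᴴ * ρ).trace =
        (Yᴴ * (C * diagonal fun i => (a i : ℂ))).trace := by
      rw [congrArg (_ * ·) hρU, conjTranspose_mul, ← star_eq_conjTranspose (star U), star_star,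
        Matrix.mul_assoc, Matrix.trace_mul_comm, conjTranspose_mul, hC]
      simp only [Matrix.mul_assoc, hUU, Matrix.mul_one]
      rfl
    rw [hcyclic, hY, trace_conjTranspose_mul_eigenOverlap_mul_diagonal, Complex.ofReal_re,
      resolventForm, spectralSum]
    refine Finset.sum_congr rfl fun i _ => Finset.sum_congr rfl fun j _ => ?_
    ring

lemma resolventForm_krausMap_le {K : κ → Matrix ι' ι ℂ} (hK : ∑ k, (K k)ᴴ * K k = 1)
    {ρ σ : Matrix ι ι ℂ} (hρ : ρ.PosDef) (hσ : σ.PosDef) (hKρ : (krausMap K ρ).PosDef)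
    (hKσ : (krausMap K σ).PosDef) {t : ℝ} (ht : t ∈ Set.Icc (0 : ℝ) 1) :
    resolventForm hKρ.1 hKσ.1 t ≤ resolventForm hρ.1 hσ.1 t := by
  obtain ⟨X, hX, hXvalue⟩ := exists_interpolatedMul_eq hKρ hKσ ht
  obtain ⟨X₀, hX₀, hX₀value⟩ := exists_interpolatedMul_eq hρ hσ ht
  rw [← hXvalue, ← hX₀value, ← variationalForm_self hX]
  exact (variationalForm_krausMap_le hK ht hρ.posSemidef hσ.posSemidef X).trans
    (variationalForm_le ht hρ.posSemidef hσ.posSemidef hX₀ _)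

lemma intervalIntegrable_sub_div_interpolation {x y : ℝ} (hx : 0 < x) (hy : 0 < y) :
    IntervalIntegrable (fun t : ℝ => (x - y) / ((1 - t) * x + t * y)) MeasureTheory.volume 0 1 := by
  refine ContinuousOn.intervalIntegrable (.div (by fun_prop) (by fun_prop) fun t ht => ?_)
  exact (interpolation_pos hx hy (by rwa [Set.uIcc_of_le zero_le_one] at ht)).ne'

lemma integral_sub_div_interpolation {x y : ℝ} (hx : 0 < x) (hy : 0 < y) :
    ∫ t in (0 : ℝ)..1, (x - y) / ((1 - t) * x + t * y) = Real.log x - Real.log y := by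
  have hderiv : ∀ t ∈ Set.uIcc (0 : ℝ) 1,
      HasDerivAt (fun t => -Real.log ((1 - t) * x + t * y))
        ((x - y) / ((1 - t) * x + t * y)) t := by
    intro t ht
    rw [Set.uIcc_of_le zero_le_one] at ht
    have hline : HasDerivAt (fun t : ℝ => (1 - t) * x + t * y) (-1 * x + 1 * y) t :=
      (((hasDerivAt_id t).const_sub 1).mul_const x).add ((hasDerivAt_id t).mul_const y)
    exact (hline.log (interpolation_pos hx hy ht).ne').neg.congr_deriv (by ring)
  rw [intervalIntegral.integral_eq_sub_of_hasDerivAt hderiv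
    (intervalIntegrable_sub_div_interpolation hx hy)]
  simp
  ring

lemma intervalIntegrable_finsetSum {α : Type*} (s : Finset α) {f : α → ℝ → ℝ} {a b : ℝ}
    (hf : ∀ i ∈ s, IntervalIntegrable (f i) MeasureTheory.volume a b) :
    IntervalIntegrable (fun t => ∑ i ∈ s, f i t) MeasureTheory.volume a b := by
  simpa only [Finset.sum_fn] using IntervalIntegrable.sum s hf

lemma intervalIntegrable_spectralSum {A B : Matrix ι ι ℂ} (hA : A.IsHermitian)
    (hB : B.IsHermitian) {f : ℝ → ℝ → ℝ → ℝ} {a b : ℝ} (hf : ∀ i j, IntervalIntegrable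
      (fun t => f t (hA.eigenvalues i) (hB.eigenvalues j)) MeasureTheory.volume a b) :
    IntervalIntegrable (fun t => spectralSum hA hB (f t)) MeasureTheory.volume a b :=
  intervalIntegrable_finsetSum _ fun i _ => intervalIntegrable_finsetSum _ fun j _ =>
    (hf i j).const_mul _

lemma integral_spectralSum {A B : Matrix ι ι ℂ} (hA : A.IsHermitian)
    (hB : B.IsHermitian) {f : ℝ → ℝ → ℝ → ℝ} {a b : ℝ} (hf : ∀ i j, IntervalIntegrable
      (fun t => f t (hA.eigenvalues i) (hB.eigenvalues j)) MeasureTheory.volume a b) :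
    ∫ t in a..b, spectralSum hA hB (f t) = spectralSum hA hB fun x y => ∫ t in a..b, f t x y := by
  simp only [spectralSum]
  rw [intervalIntegral.integral_finsetSum fun i _ =>
    intervalIntegrable_finsetSum _ fun j _ => (hf i j).const_mul _]
  refine Finset.sum_congr rfl fun i _ => ?_
  rw [intervalIntegral.integral_finsetSum fun j _ => (hf i j).const_mul _]
  simp only [intervalIntegral.integral_const_mul]

/-- The integrand of `relativeEntropy_eq_integral`, an integral representation of `D(A‖B)`. -/
noncomputable def entropyIntegrand {A B : Matrix ι ι ℂ} (hA : A.IsHermitian)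
    (hB : B.IsHermitian) (t : ℝ) : ℝ :=
  spectralSum hA hB fun x y => x * ((x - y) / ((1 - t) * x + t * y))

lemma intervalIntegrable_entropyIntegrand {ρ σ : Matrix ι ι ℂ} (hρ : ρ.PosDef) (hσ : σ.PosDef) :
    IntervalIntegrable (entropyIntegrand hρ.1 hσ.1) MeasureTheory.volume 0 1 :=
  intervalIntegrable_spectralSum _ _ fun i j =>
    (intervalIntegrable_sub_div_interpolation (hρ.eigenvalues_pos i)
      (hσ.eigenvalues_pos j)).const_mul _

lemma relativeEntropy_eq_integral {ρ σ : Matrix ι ι ℂ} (hρ : ρ.PosDef) (hσ : σ.PosDef) :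
    relativeEntropy ρ σ = ∫ t in (0 : ℝ)..1, entropyIntegrand hρ.1 hσ.1 t := by
  simp only [entropyIntegrand]
  rw [relativeEntropy_eq_spectralSum hρ.1 hσ.1, integral_spectralSum hρ.1 hσ.1 fun i j =>
    (intervalIntegrable_sub_div_interpolation (hρ.eigenvalues_pos i)
      (hσ.eigenvalues_pos j)).const_mul _]
  refine spectralSum_congr _ _ fun i j => ?_
  rw [intervalIntegral.integral_const_mul,
    integral_sub_div_interpolation (hρ.eigenvalues_pos i) (hσ.eigenvalues_pos j)]

lemma mul_sub_div_interpolation {x y t : ℝ} (ht : t ≠ 0) (hm : (1 - t) * x + t * y ≠ 0) :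
    x * ((x - y) / ((1 - t) * x + t * y)) = t⁻¹ * (x ^ 2 / ((1 - t) * x + t * y) - x) := by
  rw [← mul_div_assoc, div_sub' hm, ← div_eq_inv_mul, div_div,
    div_eq_div_iff hm (mul_ne_zero hm ht)]
  ring

lemma entropyIntegrand_eq {ρ σ : Matrix ι ι ℂ} (hρ : ρ.PosDef) (hσ : σ.PosDef) {t : ℝ}
    (ht : t ∈ Set.Ioo (0 : ℝ) 1) :
    entropyIntegrand hρ.1 hσ.1 t = t⁻¹ * (resolventForm hρ.1 hσ.1 t - ρ.trace.re) := by
  rw [entropyIntegrand, resolventForm, re_trace_eq_spectralSum hρ.1 hσ.1, ← spectralSum_sub,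
    ← spectralSum_const_mul]
  exact spectralSum_congr _ _ fun i j => mul_sub_div_interpolation ht.1.ne'
    (interpolation_pos (hρ.eigenvalues_pos i) (hσ.eigenvalues_pos j)
      (Set.Ioo_subset_Icc_self ht)).ne'

theorem relativeEntropy_krausMap_le {K : κ → Matrix ι' ι ℂ} (hK : ∑ k, (K k)ᴴ * K k = 1)
    {ρ σ : Matrix ι ι ℂ} (hρ : ρ.PosDef) (hσ : σ.PosDef) (hKρ : (krausMap K ρ).PosDef)
    (hKσ : (krausMap K σ).PosDef) :
    relativeEntropy (krausMap K ρ) (krausMap K σ) ≤ relativeEntropy ρ σ := by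
  rw [relativeEntropy_eq_integral hKρ hKσ, relativeEntropy_eq_integral hρ hσ]
  refine intervalIntegral.integral_mono_on_of_le_Ioo zero_le_one
    (intervalIntegrable_entropyIntegrand hKρ hKσ) (intervalIntegrable_entropyIntegrand hρ hσ)
    fun t ht => ?_
  rw [entropyIntegrand_eq hKρ hKσ ht, entropyIntegrand_eq hρ hσ ht, trace_krausMap hK]
  exact mul_le_mul_of_nonneg_left (sub_le_sub_right (resolventForm_krausMap_le hK hρ hσ hKρ hKσ
    (Set.Ioo_subset_Icc_self ht)) _) (inv_nonneg.2 ht.1.le)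

end DataProcessing

section Commutators

lemma cfc_mul_mul_conjTranspose {ι : Type*} [Fintype ι] [DecidableEq ι] {W A : Matrix ι ι ℂ}
    (hW : W ∈ unitaryGroup ι ℂ) (hA : A.IsHermitian) (f : ℝ → ℝ) :
    cfc f (W * A * Wᴴ) = W * cfc f A * Wᴴ := by
  have hconj : Continuous (Unitary.conjStarAlgAut ℂ (Matrix ι ι ℂ) ⟨W, hW⟩) :=
    (continuous_const.matrix_mul continuous_id).matrix_mul continuous_const
  exact (StarAlgHomClass.map_cfc (Unitary.conjStarAlgAut ℂ (Matrix ι ι ℂ) ⟨W, hW⟩) f A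
    (A.finite_real_spectrum.continuousOn f) hconj hA.isSelfAdjoint
    (isHermitian_mul_mul_conjTranspose W hA).isSelfAdjoint).symm

lemma sum_doubleCommutator {ι κ : Type*} [Fintype ι] [DecidableEq ι] [Fintype κ]
    {H : κ → Matrix ι ι ℂ} (hH : ∑ j, H j * H j = 1) (L : Matrix ι ι ℂ) :
    ∑ j, (H j * (H j * L - L * H j) - (H j * L - L * H j) * H j) =
      2 • (L - ∑ j, H j * L * H j) := by
  have hexpand (j : κ) : H j * (H j * L - L * H j) - (H j * L - L * H j) * H j =
      H j * H j * L + L * (H j * H j) - 2 • (H j * L * H j) := by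
    noncomm_ring
  simp only [hexpand, Finset.sum_sub_distrib, Finset.sum_add_distrib, ← Finset.sum_mul,
    ← Finset.mul_sum, hH, Matrix.one_mul, Matrix.mul_one, smul_sub, two_smul]

end Commutators

section Characters

variable {d n : ℕ}

lemma ch_eq_stdAddChar [NeZero d] (z : ZMod d) : ch d z = ZMod.stdAddChar z := by
  rw [ZMod.stdAddChar_apply, ZMod.toCircle_apply, ch]

/-- Parseval's identity. -/
lemma sum_dft_mul_mul_conjTranspose [NeZero d] {ι : Type*} [Fintype ι]
    (W : ZMod d → Matrix ι ι ℂ) (L : Matrix ι ι ℂ) :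
    ∑ j, ZMod.dft W j * L * (ZMod.dft W j)ᴴ = (d : ℂ) • ∑ s, W s * L * (W s)ᴴ := by
  have hexpand (j : ZMod d) : ZMod.dft W j * L * (ZMod.dft W j)ᴴ =
      ∑ s, ∑ t, ZMod.stdAddChar (j * (t - s)) • (W s * L * (W t)ᴴ) := by
    have hphase (s t : ZMod d) : (ZMod.stdAddChar (j * (t - s)) : ℂ) =
        ZMod.stdAddChar (-(s * j)) * star (ZMod.stdAddChar (-(t * j)) : ℂ) := by
      rw [Complex.star_def, ← AddChar.map_neg_eq_conj, ← AddChar.map_add_eq_mul]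
      ring_nf
    simp only [ZMod.dft_apply, conjTranspose_sum, conjTranspose_smul, Finset.sum_mul,
      Finset.mul_sum, Matrix.smul_mul, Matrix.mul_smul, smul_smul, hphase]
    rw [Finset.sum_comm]
    simp only [mul_comm]
  have horthogonal (s t : ZMod d) :
      ∑ j, (ZMod.stdAddChar (j * (t - s)) : ℂ) = if s = t then (d : ℂ) else 0 := by
    rw [AddChar.sum_mulShift (t - s) (ZMod.isPrimitive_stdAddChar d), ZMod.card]
    simp only [sub_eq_zero, eq_comm]
    split_ifs <;> simp
  simp only [hexpand]
  rw [Finset.sum_comm, Finset.smul_sum]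
  refine Finset.sum_congr rfl fun s _ => ?_
  rw [Finset.sum_comm]
  simp only [← Finset.sum_smul, horthogonal, ite_smul, zero_smul, Finset.sum_ite_eq,
    Finset.mem_univ, if_true]

lemma qdot_sub (p v w : QV d n) : qdot p (v - w) = qdot p v - qdot p w :=
  dotProduct_sub p v w

lemma isHermitian_embedAt {k : Fin n} {M : Matrix (ZMod d) (ZMod d) ℂ} (hM : M.IsHermitian) :
    (embedAt d n k M).IsHermitian := by
  ext v w
  simp only [embedAt, conjTranspose_apply, of_apply, apply_ite star, hM.apply, star_zero,
    eq_comm (a := w _)]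

lemma isHermitian_projX [NeZero d] (j : ZMod d) : (projX d j).IsHermitian := by
  ext a b
  simp only [projX, conjTranspose_apply, of_apply, ch_eq_stdAddChar, star_mul', Complex.star_def,
    ← AddChar.map_neg_eq_conj, map_inv₀, map_natCast, ← mul_neg, neg_sub]

lemma isHermitian_projZ (j : ZMod d) : (projZ d j).IsHermitian := by
  ext a b
  simp only [projZ, conjTranspose_apply, of_apply, and_comm, apply_ite star, star_one, star_zero]

lemma eq_add_single_iff {v w : QV d n} {k : Fin n} {s : ZMod d} :
    v = w + Pi.single k s ↔ (∀ i, i ≠ k → v i = w i) ∧ s = v k - w k := by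
  constructor
  · rintro rfl
    exact ⟨fun i hi => by simp [hi], by simp⟩
  · rintro ⟨hoff, rfl⟩
    ext i
    rcases eq_or_ne i k with rfl | hi
    · simp
    · simp [hi, hoff i hi]

end Characters

section FisherInformation

variable {d n : ℕ} [Fact (Nat.Prime d)]

lemma matLog_eq_cfc {ρ : Mat d n} (hρ : ρ.IsHermitian) : matLog ρ = cfc Real.log ρ := by
  rw [matLog, dif_pos hρ, cfc_eq_eigenvectorUnitary_mul hρ]

lemma sum_fisherJ_eq {W H : ZMod d → Mat d n} (hW : ∀ s, W s ∈ unitaryGroup (QV d n) ℂ)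
    (hH : ∀ j, (H j).IsHermitian) (hWH : ∀ j, H j = (d : ℂ)⁻¹ • ZMod.dft W j) {ρ : Mat d n}
    (hρ : ρ.IsHermitian) :
    ∑ j, fisherJ ρ (H j) = 2 / d * ∑ s, relativeEntropy ρ (W s * ρ * (W s)ᴴ) := by
  have hd : (d : ℂ) ≠ 0 := NeZero.ne _
  have hWW (s : ZMod d) : W s * (W s)ᴴ = 1 := mem_unitaryGroup_iff.1 (hW s)
  have htwirl (L : Mat d n) : ∑ j, H j * L * H j = (d : ℂ)⁻¹ • ∑ s, W s * L * (W s)ᴴ := by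
    have hterm (j : ZMod d) : H j * L * H j =
        ((d : ℂ)⁻¹ * (d : ℂ)⁻¹) • (ZMod.dft W j * L * (ZMod.dft W j)ᴴ) := by
      rw [← congrArg (H j * L * ·) (hH j).eq, hWH, conjTranspose_smul]
      simp [smul_smul]
    simp only [hterm]
    rw [← Finset.smul_sum, sum_dft_mul_mul_conjTranspose, smul_smul, mul_assoc,
      inv_mul_cancel₀ hd, mul_one]
  have hone : ∑ j, H j * H j = 1 := by
    simpa [hWW, ZMod.card, ← Nat.cast_smul_eq_nsmul ℂ, hd] using htwirl 1
  set L := cfc Real.log ρ with hL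
  have hdivergence : L - ∑ j, H j * L * H j =
      (d : ℂ)⁻¹ • ∑ s, (L - cfc Real.log (W s * ρ * (W s)ᴴ)) := by
    simp only [cfc_mul_mul_conjTranspose (hW _) hρ, htwirl, Finset.sum_sub_distrib, smul_sub, ← hL]
    simp [ZMod.card, ← Nat.cast_smul_eq_nsmul ℂ, hd]
  simp only [fisherJ, relativeEntropy, matLog_eq_cfc hρ, ← Complex.re_sum, ← trace_sum,
    ← Finset.mul_sum]
  rw [sum_doubleCommutator hone, hdivergence, ← Nat.cast_smul_eq_nsmul ℂ, smul_smul,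
    Matrix.mul_smul, trace_smul, smul_eq_mul, ← Complex.re_ofReal_mul]
  push_cast
  rfl

lemma weyl_mul_apply (p q : QV d n) (M : Mat d n) (v w : QV d n) :
    (weyl d n p q * M) v w = ch d (qdot p (v - q) + 2⁻¹ * qdot p q) * M (v - q) w := by
  rw [Matrix.mul_apply, Finset.sum_eq_single (v - q)]
  · simp [weyl]
  · intro x _ hx
    rw [weyl, of_apply, if_neg fun hv => hx (eq_sub_of_add_eq hv.symm), zero_mul]
  · simp

lemma weyl_mul_mul_conjTranspose_apply (p q : QV d n) (M : Mat d n) (v w : QV d n) :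
    (weyl d n p q * M * (weyl d n p q)ᴴ) v w = ch d (qdot p (v - w)) * M (v - q) (w - q) := by
  have hadjoint : M * (weyl d n p q)ᴴ = (weyl d n p q * Mᴴ)ᴴ := by
    rw [conjTranspose_mul, conjTranspose_conjTranspose]
  have hphase : ch d (qdot p (v - w)) = ch d (qdot p (v - q) + 2⁻¹ * qdot p q) *
      star (ch d (qdot p (w - q) + 2⁻¹ * qdot p q)) := by
    simp only [ch_eq_stdAddChar, Complex.star_def]
    rw [← AddChar.map_neg_eq_conj, ← AddChar.map_add_eq_mul, qdot_sub, qdot_sub, qdot_sub]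
    ring_nf
  rw [Matrix.mul_assoc, hadjoint, weyl_mul_apply, conjTranspose_apply, weyl_mul_apply,
    conjTranspose_apply, star_mul', star_star, hphase, mul_assoc]

lemma weyl_mem_unitaryGroup (p q : QV d n) : weyl d n p q ∈ unitaryGroup (QV d n) ℂ := by
  rw [mem_unitaryGroup_iff, star_eq_conjTranspose]
  ext v w
  have hentry := weyl_mul_mul_conjTranspose_apply p q 1 v w
  rw [Matrix.mul_one] at hentry
  rw [hentry]
  rcases eq_or_ne v w with rfl | hvw
  · simp [ch_eq_stdAddChar, qdot]
  · rw [one_apply_ne (sub_left_injective.ne hvw), one_apply_ne hvw, mul_zero]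

lemma embedAt_projX (k : Fin n) (j : ZMod d) : embedAt d n k (projX d j) =
    (d : ℂ)⁻¹ • ZMod.dft (fun s => weyl d n 0 (Pi.single k s)) j := by
  ext v w
  have hweyl (s : ZMod d) : weyl d n 0 (Pi.single k s) v w =
      if (∀ i, i ≠ k → v i = w i) ∧ s = v k - w k then 1 else 0 := by
    simp [weyl, qdot, ch_eq_stdAddChar, eq_add_single_iff]
  simp only [embedAt, projX, ZMod.dft_apply, of_apply, Matrix.smul_apply, Matrix.sum_apply, hweyl,
    smul_eq_mul, ite_and, mul_ite, mul_one, mul_zero, ch_eq_stdAddChar]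
  split_ifs
  · rw [Finset.sum_ite_eq', if_pos (Finset.mem_univ _), ← neg_sub (v k), mul_neg, mul_comm j]
  · simp

lemma embedAt_projZ (k : Fin n) (j : ZMod d) : embedAt d n k (projZ d j) =
    (d : ℂ)⁻¹ • ZMod.dft (fun s => weyl d n (Pi.single k s) 0) j := by
  have hd : (d : ℂ) ≠ 0 := NeZero.ne _
  ext v w
  have hweyl (s : ZMod d) : weyl d n (Pi.single k s) 0 v w =
      if v = w then ZMod.stdAddChar (s * w k) else 0 := by
    simp [weyl, qdot, ch_eq_stdAddChar, Pi.single_apply]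
  have hphase (s : ZMod d) : (ZMod.stdAddChar (-(s * j)) * ZMod.stdAddChar (s * w k) : ℂ) =
      ZMod.stdAddChar (s * (w k - j)) := by
    rw [← AddChar.map_add_eq_mul]
    ring_nf
  simp only [embedAt, projZ, ZMod.dft_apply, of_apply, Matrix.smul_apply, Matrix.sum_apply, hweyl,
    smul_eq_mul, mul_ite, mul_zero, hphase]
  rcases eq_or_ne v w with rfl | hvw
  · simp only [if_true]
    rw [AddChar.sum_mulShift (v k - j) (ZMod.isPrimitive_stdAddChar d), ZMod.card]
    by_cases hj : v k = j <;> simp [hj, sub_eq_zero, hd]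
  · have hsite : ¬ ((∀ i, i ≠ k → v i = w i) ∧ v k = j ∧ w k = j) := fun ⟨hoff, hv, hw⟩ =>
      hvw (funext fun i => (eq_or_ne i k).elim (fun hi => hi ▸ hv.trans hw.symm) (hoff i))
    rw [← ite_and, if_neg hsite]
    simp [hvw]

/-- The relative entropy between `ρ` and its translate by the Weyl operator `w(p,q)`. -/
noncomputable def weylDivergence (ρ : Mat d n) (p q : QV d n) : ℝ :=
  relativeEntropy ρ (weyl d n p q * ρ * (weyl d n p q)ᴴ)

lemma fisherTotal_eq_sum_weylDivergence {ρ : Mat d n} (hρ : ρ.IsHermitian) :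
    fisherTotal d n ρ = ∑ k, 2 / d * ∑ s, (weylDivergence ρ 0 (Pi.single k s) +
      weylDivergence ρ (Pi.single k s) 0) := by
  refine Finset.sum_congr rfl fun k _ => ?_
  rw [Finset.sum_add_distrib, Finset.sum_add_distrib, mul_add]
  exact congrArg₂ (· + ·)
    (sum_fisherJ_eq (fun s => weyl_mem_unitaryGroup _ _)
      (fun j => isHermitian_embedAt (isHermitian_projX j)) (embedAt_projX k) hρ)
    (sum_fisherJ_eq (fun s => weyl_mem_unitaryGroup _ _)
      (fun j => isHermitian_embedAt (isHermitian_projZ j)) (embedAt_projZ k) hρ)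

end FisherInformation

section Convolution

variable {d n : ℕ} [Fact (Nat.Prime d)] {g00 g01 g10 g11 : ZMod d}

/-- The linear change of coordinates `(k, l) ↦ (g₀₀ k + g₁₀ l, g₀₁ k + g₁₁ l)`, that is,
multiplication by `Gᵀ`. Its inverse is the permutation of basis vectors that defines `convU`. -/
def convEquiv (hdet : g00 * g11 - g01 * g10 ≠ 0) : QV d n × QV d n ≃ QV d n × QV d n where
  toFun kl := (g00 • kl.1 + g10 • kl.2, g01 • kl.1 + g11 • kl.2)
  invFun ij :=
    (fun a => (g00 * g11 - g01 * g10)⁻¹ * g11 * ij.1 a - (g00 * g11 - g01 * g10)⁻¹ * g10 * ij.2 a,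
      fun a => -((g00 * g11 - g01 * g10)⁻¹ * g01) * ij.1 a +
        (g00 * g11 - g01 * g10)⁻¹ * g00 * ij.2 a)
  left_inv kl := by
    ext i <;> simp only [Pi.add_apply, Pi.smul_apply, smul_eq_mul] <;> field_simp <;> ring
  right_inv ij := by
    ext i <;> simp only [Pi.add_apply, Pi.smul_apply, smul_eq_mul] <;> field_simp <;> ring

lemma convU_eq_submatrix (hdet : g00 * g11 - g01 * g10 ≠ 0) :
    convU d n g00 g01 g10 g11 =
      (1 : Matrix _ _ ℂ).submatrix (convEquiv hdet) (Equiv.refl (QV d n × QV d n)) := by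
  ext kl ij
  rw [submatrix_apply, one_apply]
  exact if_congr (convEquiv hdet).eq_symm_apply rfl rfl

lemma conv_apply (hdet : g00 * g11 - g01 * g10 ≠ 0) (ρ σ : Mat d n) (k k' : QV d n) :
    conv d n g00 g01 g10 g11 ρ σ k k' =
      ∑ l, ρ (g00 • k + g10 • l) (g00 • k' + g10 • l) *
        σ (g01 • k + g11 • l) (g01 • k' + g11 • l) := by
  rw [conv, convU_eq_submatrix hdet, conjTranspose_submatrix, conjTranspose_one,
    one_submatrix_mul, mul_submatrix_one]
  rfl

lemma conv_swap (hdet : g00 * g11 - g01 * g10 ≠ 0) (hdet' : g01 * g10 - g00 * g11 ≠ 0)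
    (ρ σ : Mat d n) :
    conv d n g00 g01 g10 g11 ρ σ = conv d n g01 g00 g11 g10 σ ρ := by
  ext k k'
  simp only [conv_apply hdet, conv_apply hdet', mul_comm]

lemma trace_conv (hdet : g00 * g11 - g01 * g10 ≠ 0) (ρ σ : Mat d n) :
    (conv d n g00 g01 g10 g11 ρ σ).trace = ρ.trace * σ.trace := by
  simp only [trace, diag, conv_apply hdet, Fintype.sum_mul_sum, ← Fintype.sum_prod_type']
  exact (convEquiv hdet).sum_comp fun ij => ρ ij.1 ij.1 * σ ij.2 ij.2

lemma conv_one (h00 : g00 ≠ 0) (h11 : g11 ≠ 0) (hdet : g00 * g11 - g01 * g10 ≠ 0) (σ : Mat d n) :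
    conv d n g00 g01 g10 g11 1 σ = σ.trace • 1 := by
  ext k k'
  rw [conv_apply hdet, Matrix.smul_apply, smul_eq_mul]
  rcases eq_or_ne k k' with rfl | hk
  · simp only [one_apply_eq, one_mul, mul_one]
    exact (((Equiv.smulRight h11).trans (Equiv.addLeft (g01 • k)))).sum_comp fun j => σ j j
  · have hne (l : QV d n) : g00 • k + g10 • l ≠ g00 • k' + g10 • l :=
      fun h => hk (smul_right_injective _ h00 (add_right_cancel h))
    simp [one_apply_ne (hne _), one_apply_ne hk]

/-- The Kraus operators `⟨l| U (1 ⊗ B |m⟩)`, indexed by `(l, m)`, of the channel `ρ ↦ ρ ⊠ B B†`. -/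
noncomputable def convKraus (g00 g01 g10 g11 : ZMod d) (B : Mat d n) (lm : QV d n × QV d n) :
    Mat d n :=
  diagonal (fun k => B (g01 • k + g11 • lm.1) lm.2) *
    (1 : Mat d n).submatrix (fun k => g00 • k + g10 • lm.1) (Equiv.refl _)

lemma krausMap_convKraus (hdet : g00 * g11 - g01 * g10 ≠ 0) (ρ B : Mat d n) :
    krausMap (convKraus g00 g01 g10 g11 B) ρ = conv d n g00 g01 g10 g11 ρ (B * Bᴴ) := by
  ext k k'
  rw [conv_apply hdet, krausMap, Matrix.sum_apply, Fintype.sum_prod_type]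
  refine Finset.sum_congr rfl fun l _ => ?_
  rw [Matrix.mul_apply, Finset.mul_sum]
  refine Finset.sum_congr rfl fun m _ => ?_
  have hkraus : convKraus g00 g01 g10 g11 B (l, m) * ρ * (convKraus g00 g01 g10 g11 B (l, m))ᴴ =
      diagonal (fun k => B (g01 • k + g11 • l) m) *
        ρ.submatrix (fun k => g00 • k + g10 • l) (fun k => g00 • k + g10 • l) *
        diagonal (star fun k => B (g01 • k + g11 • l) m) := by
    rw [convKraus, conjTranspose_mul, conjTranspose_submatrix, conjTranspose_one,
      diagonal_conjTranspose, Matrix.mul_assoc (diagonal _), one_submatrix_mul, ← Matrix.mul_assoc,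
      Matrix.mul_assoc (diagonal _), mul_submatrix_one]
    rfl
  rw [hkraus, mul_diagonal, diagonal_mul, submatrix_apply, Pi.star_apply, conjTranspose_apply]
  ring

lemma exists_krausMap_eq_conv (hdet : g00 * g11 - g01 * g10 ≠ 0) {σ : Mat d n}
    (hσ : IsState d n σ) :
    ∃ K : QV d n × QV d n → Mat d n, ∑ x, (K x)ᴴ * K x = 1 ∧
      ∀ ρ, krausMap K ρ = conv d n g00 g01 g10 g11 ρ σ := by
  obtain ⟨B, hB⟩ := exists_eq_mul_conjTranspose_of_posSemidef hσ.1
  have hconv (ρ : Mat d n) :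
      krausMap (convKraus g00 g01 g10 g11 B) ρ = conv d n g00 g01 g10 g11 ρ σ := by
    rw [krausMap_convKraus hdet, ← hB]
  refine ⟨convKraus g00 g01 g10 g11 B, sum_conjTranspose_mul_self_eq_one fun ρ => ?_, hconv⟩
  rw [hconv, trace_conv hdet, hσ.2, mul_one]

lemma qdot_smul (a : ZMod d) (p q : QV d n) : qdot p (a • q) = qdot (a • p) q := by
  simp only [qdot, Pi.smul_apply, smul_eq_mul, mul_left_comm, mul_assoc]

lemma conv_weyl_conj (hdet : g00 * g11 - g01 * g10 ≠ 0) (ρ σ : Mat d n) (p q : QV d n) :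
    conv d n g00 g01 g10 g11 (weyl d n p q * ρ * (weyl d n p q)ᴴ) σ =
      weyl d n (g00 • p) ((g11 / (g00 * g11 - g01 * g10)) • q) * conv d n g00 g01 g10 g11 ρ σ *
        (weyl d n (g00 • p) ((g11 / (g00 * g11 - g01 * g10)) • q))ᴴ := by
  set r := g11 / (g00 * g11 - g01 * g10) with hr
  set t := g01 / (g00 * g11 - g01 * g10) with ht
  have hρarg (x l : QV d n) : g00 • (x - r • q) + g10 • (l + t • q) = g00 • x + g10 • l - q := by
    ext i
    simp only [Pi.add_apply, Pi.sub_apply, Pi.smul_apply, smul_eq_mul, hr, ht]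
    field_simp
    ring
  have hσarg (x l : QV d n) : g01 • (x - r • q) + g11 • (l + t • q) = g01 • x + g11 • l := by
    ext i
    simp only [Pi.add_apply, Pi.sub_apply, Pi.smul_apply, smul_eq_mul, hr, ht]
    ring
  ext k k'
  have hphase (l : QV d n) :
      g00 • k + g10 • l - (g00 • k' + g10 • l) = g00 • (k - k') := by
    rw [smul_sub, add_sub_add_right_eq_sub]
  rw [weyl_mul_mul_conjTranspose_apply, conv_apply hdet, conv_apply hdet, Finset.mul_sum,
    ← Equiv.sum_comp (Equiv.addRight (t • q)) fun l => _ * (_ * _)]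
  refine Finset.sum_congr rfl fun l _ => ?_
  simp only [weyl_mul_mul_conjTranspose_apply, hphase, qdot_smul, Equiv.coe_addRight, hρarg,
    hσarg, mul_assoc]

lemma posDef_conv (h00 : g00 ≠ 0) (h11 : g11 ≠ 0) (hdet : g00 * g11 - g01 * g10 ≠ 0)
    {ρ σ : Mat d n} (hρ : ρ.PosDef) (hσ : IsState d n σ) :
    (conv d n g00 g01 g10 g11 ρ σ).PosDef := by
  obtain ⟨K, -, hconv⟩ := exists_krausMap_eq_conv hdet hσ
  rw [← hconv]
  refine posDef_krausMap ?_ hρ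
  rw [hconv, conv_one h00 h11 hdet, hσ.2, one_smul]
  exact .one

lemma weylDivergence_conv_le (h00 : g00 ≠ 0) (h11 : g11 ≠ 0)
    (hdet : g00 * g11 - g01 * g10 ≠ 0) {ρ σ : Mat d n} (hρ : ρ.PosDef) (hσ : IsState d n σ)
    (p q : QV d n) :
    weylDivergence (conv d n g00 g01 g10 g11 ρ σ) (g00 • p)
      ((g11 / (g00 * g11 - g01 * g10)) • q) ≤ weylDivergence ρ p q := by
  obtain ⟨K, hK, hconv⟩ := exists_krausMap_eq_conv hdet hσ
  have hρ' : (weyl d n p q * ρ * (weyl d n p q)ᴴ).PosDef :=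
    hρ.mul_mul_conjTranspose_same (vecMul_injective_of_isUnit
      (Unitary.isUnit_coe (U := ⟨_, weyl_mem_unitaryGroup p q⟩)))
  rw [weylDivergence, weylDivergence, ← conv_weyl_conj hdet, ← hconv, ← hconv]
  refine relativeEntropy_krausMap_le hK hρ hρ' ?_ ?_ <;> rw [hconv]
  exacts [posDef_conv h00 h11 hdet hρ hσ, posDef_conv h00 h11 hdet hρ' hσ]

theorem fisherTotal_conv_le_left (h00 : g00 ≠ 0) (h11 : g11 ≠ 0)
    (hdet : g00 * g11 - g01 * g10 ≠ 0) {ρ σ : Mat d n} (hρ : ρ.PosDef) (hσ : IsState d n σ) :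
    fisherTotal d n (conv d n g00 g01 g10 g11 ρ σ) ≤ fisherTotal d n ρ := by
  have hle := weylDivergence_conv_le h00 h11 hdet hρ hσ
  rw [fisherTotal_eq_sum_weylDivergence (posDef_conv h00 h11 hdet hρ hσ).1,
    fisherTotal_eq_sum_weylDivergence hρ.1]
  refine Finset.sum_le_sum fun k _ => mul_le_mul_of_nonneg_left ?_ (by positivity)
  rw [Finset.sum_add_distrib, Finset.sum_add_distrib]
  refine add_le_add ((Equiv.sum_comp (Equiv.smulRight (div_ne_zero h11 hdet)) _).symm.trans_le
    (Finset.sum_le_sum fun s _ => ?_)) ((Equiv.sum_comp (Equiv.smulRight h00) _).symm.trans_le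
    (Finset.sum_le_sum fun s _ => ?_))
  · simpa only [Equiv.smulRight_apply, smul_zero, ← Pi.single_smul'] using
      hle 0 (Pi.single k s)
  · simpa only [Equiv.smulRight_apply, smul_zero, ← Pi.single_smul'] using
      hle (Pi.single k s) 0

end Convolution

/-- Convolution decreases the Fisher information: for positive
definite states `ρ, σ`, `J(ρ ⊠ σ) ≤ min{J(ρ), J(σ)}`. -/
theorem statement14 (d n : ℕ) [Fact (Nat.Prime d)] (hd : Odd d) (hn : 1 ≤ n)
    (g00 g01 g10 g11 : ZMod d) (h00 : g00 ≠ 0) (h01 : g01 ≠ 0)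
    (h10 : g10 ≠ 0) (h11 : g11 ≠ 0) (hdet : g00 * g11 - g01 * g10 ≠ 0)
    (ρ σ : Mat d n) (hρ : IsState d n ρ) (hσ : IsState d n σ)
    (hρpd : ρ.PosDef) (hσpd : σ.PosDef) :
    fisherTotal d n (conv d n g00 g01 g10 g11 ρ σ) ≤
      min (fisherTotal d n ρ) (fisherTotal d n σ) := by
  have hdet' : g01 * g10 - g00 * g11 ≠ 0 := by rwa [← neg_sub, neg_ne_zero]
  refine le_min (fisherTotal_conv_le_left h00 h11 hdet hρpd hσ) ?_
  rw [conv_swap hdet hdet']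
  exact fisherTotal_conv_le_left h01 h10 hdet' hσpd hρ

end PaperQI
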